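/- The right quantum-group boundary operator b_r is an idempotent U_q(sl_2)-intertwiner with blob weight y_r = [α_r+1]_q/[α_r]_q: b_r² = b_r; b_r commutes with the coproduct actions Δ(E), Δ(F), Δ(K^{±1}) on ℂ²⊗V_{α_r}; and on ℂ²⊗ℂ²⊗V_{α_r} one has e ∘ (Id_{ℂ²}⊗b_r) ∘ e = ([α_r+1]_q/[α_r]_q) · e, where e acts as the Temperley–Lieb matrix on the two ℂ² factors and b_r acts on the second ℂ² factor and V_{α_r}. -/

import Mathlib

noncomputable section

/-- The Verma module `V_α`: finitely supported complex sequences, basis `|n⟩`. -/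
abbrev Verma : Type := ℕ →₀ ℂ

/-- The basis vector `|n⟩`. -/
noncomputable def ket (n : ℕ) : Verma := Finsupp.single n 1

/-- The linear operator on `Verma` determined by its values on the basis vectors. -/
noncomputable def ladderOp (t : ℕ → Verma) : Module.End ℂ Verma :=
  Finsupp.lsum ℂ fun n => LinearMap.toSpanSingleton ℂ Verma (t n)

/-- The q-deformed number `[x]_q` with `q = e^h`. -/
noncomputable def qnum (h x : ℂ) : ℂ :=
  (Complex.exp (h * x) - Complex.exp (-(h * x))) / (Complex.exp h - Complex.exp (-h))

/-- `E |n⟩ = [n]_q [α−n]_q |n−1⟩`, `E |0⟩ = 0`. -/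
noncomputable def Eop (h α : ℂ) : Module.End ℂ Verma :=
  ladderOp fun n => if n = 0 then 0 else (qnum h n * qnum h (α - n)) • ket (n - 1)

/-- `F |n⟩ = |n+1⟩`. -/
noncomputable def Fop : Module.End ℂ Verma := ladderOp fun n => ket (n + 1)

/-- `K |n⟩ = q^{α−1−2n} |n⟩`. -/
noncomputable def Kop (h α : ℂ) : Module.End ℂ Verma :=
  ladderOp fun n => Complex.exp (h * (α - 1 - 2 * n)) • ket n

/-- `K⁻¹ |n⟩ = q^{−(α−1−2n)} |n⟩`. -/
noncomputable def Kinv (h α : ℂ) : Module.End ℂ Verma :=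
  ladderOp fun n => Complex.exp (-(h * (α - 1 - 2 * n))) • ket n

/-- Operators on `ℂ² ⊗ V_{α_r}` as 2×2 matrices with entries in `End(V_{α_r})`
(rows/columns indexed by the `ℂ²` basis `↑, ↓`). -/
abbrev Op2 : Type := Matrix (Fin 2) (Fin 2) (Module.End ℂ Verma)

/-- The right boundary projector `b_r` on `ℂ² ⊗ V_{α_r}`. -/
noncomputable def bR (h αr : ℂ) : Op2 :=
  (Complex.exp (h * αr) - Complex.exp (-(h * αr)))⁻¹ •
    !![Complex.exp h • Kop h αr - Complex.exp (-(h * αr)) • 1,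
        (Complex.exp h * (Complex.exp h - Complex.exp (-h))) • (Kop h αr * Fop);
        (Complex.exp h - Complex.exp (-h)) • Eop h αr,
        (-Complex.exp (-h)) • Kop h αr + Complex.exp (h * αr) • 1]

/-- The coproduct action `Δ(E) = 1⊗E + E⊗K` on `ℂ² ⊗ V_{α_r}`. -/
noncomputable def coE (h αr : ℂ) : Op2 := !![Eop h αr, Kop h αr; 0, Eop h αr]

/-- The coproduct action `Δ(F) = K⁻¹⊗F + F⊗1` on `ℂ² ⊗ V_{α_r}`. -/
noncomputable def coF (h : ℂ) : Op2 :=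
  !![Complex.exp (-h) • Fop, 0; 1, Complex.exp h • Fop]

/-- The coproduct action `Δ(K) = K⊗K` on `ℂ² ⊗ V_{α_r}`. -/
noncomputable def coK (h αr : ℂ) : Op2 :=
  !![Complex.exp h • Kop h αr, 0; 0, Complex.exp (-h) • Kop h αr]

/-- The coproduct action `Δ(K⁻¹) = K⁻¹⊗K⁻¹` on `ℂ² ⊗ V_{α_r}`. -/
noncomputable def coKinv (h αr : ℂ) : Op2 :=
  !![Complex.exp (-h) • Kinv h αr, 0; 0, Complex.exp h • Kinv h αr]

/-- Operators on `ℂ² ⊗ ℂ² ⊗ V_{α_r}` as matrices with entries in `End(V_{α_r})`, indexed by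
pairs (state of the first `ℂ²`, state of the second `ℂ²`). -/
abbrev Op4 : Type := Matrix (Fin 2 × Fin 2) (Fin 2 × Fin 2) (Module.End ℂ Verma)

/-- The Temperley–Lieb matrix on `ℂ² ⊗ ℂ²` (ordered basis ↑↑, ↑↓, ↓↑, ↓↓):
rows (0,0,0,0), (0, q, −1, 0), (0, −1, q⁻¹, 0), (0,0,0,0). -/
noncomputable def eTL (h : ℂ) : Matrix (Fin 2 × Fin 2) (Fin 2 × Fin 2) ℂ :=
  Matrix.of fun p r =>
    if p = ((0 : Fin 2), (1 : Fin 2)) ∧ r = ((0 : Fin 2), (1 : Fin 2)) then Complex.exp h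
    else if p = ((0 : Fin 2), (1 : Fin 2)) ∧ r = ((1 : Fin 2), (0 : Fin 2)) then -1
    else if p = ((1 : Fin 2), (0 : Fin 2)) ∧ r = ((0 : Fin 2), (1 : Fin 2)) then -1
    else if p = ((1 : Fin 2), (0 : Fin 2)) ∧ r = ((1 : Fin 2), (0 : Fin 2)) then
      Complex.exp (-h)
    else 0

/-- `e` acting on the two `ℂ²` factors of `ℂ² ⊗ ℂ² ⊗ V_{α_r}`, identity on `V_{α_r}`. -/
noncomputable def eOp4 (h : ℂ) : Op4 :=
  Matrix.of fun p r => eTL h p r • (1 : Module.End ℂ Verma)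

/-- `Id_{ℂ²} ⊗ b_r`: the operator `b_r` acting on the second `ℂ²` factor and `V_{α_r}`. -/
noncomputable def bSnd (h αr : ℂ) : Op4 :=
  Matrix.of fun p r => if p.1 = r.1 then bR h αr p.2 r.2 else 0

set_option linter.all false

theorem op_ext_ket {f g : Module.End ℂ Verma} (H : ∀ n, f (ket n) = g (ket n)) : f = g := by
  apply Finsupp.lhom_ext'
  intro n
  apply LinearMap.ext_ring
  exact H n

theorem ladderOp_ket (t : ℕ → Verma) (n : ℕ) : ladderOp t (ket n) = t n := by
  simp [ladderOp, ket]

theorem Fop_ket (n : ℕ) : Fop (ket n) = ket (n + 1) := by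
  simp [Fop, ladderOp_ket]

theorem exp_nat_h (h : ℂ) (n : ℕ) : Complex.exp (h * n) = Complex.exp h ^ n := by
  rw [mul_comm, Complex.exp_nat_mul]

theorem Kop_ket (h α : ℂ) (n : ℕ) : Kop h α (ket n) =
    (Complex.exp (h * α) * (Complex.exp h)⁻¹ * ((Complex.exp h ^ n)⁻¹) ^ 2) • ket n := by
  rw [Kop, ladderOp_ket]
  congr 1
  rw [← exp_nat_h, ← Complex.exp_neg, ← Complex.exp_neg, ← Complex.exp_nat_mul,
    ← Complex.exp_add, ← Complex.exp_add]
  congr 1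
  push_cast
  ring

theorem Kinv_ket (h α : ℂ) (n : ℕ) : Kinv h α (ket n) =
    ((Complex.exp (h * α))⁻¹ * (Complex.exp h) * ((Complex.exp h ^ n)) ^ 2) • ket n := by
  rw [Kinv, ladderOp_ket]
  congr 1
  rw [← exp_nat_h, ← Complex.exp_neg, ← Complex.exp_nat_mul,
    ← Complex.exp_add, ← Complex.exp_add]
  congr 1
  push_cast
  ring

theorem Eop_ket_zero (h α : ℂ) : Eop h α (ket 0) = 0 := by
  simp [Eop, ladderOp_ket]

theorem Eop_ket_succ (h α : ℂ) (n : ℕ) : Eop h α (ket (n + 1)) =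
    ((Complex.exp h ^ (n + 1) - (Complex.exp h ^ (n + 1))⁻¹) *
      (Complex.exp (h * α) * (Complex.exp h ^ (n + 1))⁻¹ -
        (Complex.exp (h * α))⁻¹ * Complex.exp h ^ (n + 1)) *
      ((Complex.exp h - (Complex.exp h)⁻¹)⁻¹) ^ 2) • ket n := by
  rw [Eop, ladderOp_ket]
  simp only [Nat.add_eq_zero_iff, one_ne_zero, and_false, if_false, Nat.add_sub_cancel]
  congr 1
  have h1 : Complex.exp (h * (α - ((n + 1 : ℕ) : ℂ))) =
      Complex.exp (h * α) * (Complex.exp h ^ (n + 1))⁻¹ := by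
    rw [← exp_nat_h, ← Complex.exp_neg, ← Complex.exp_add]
    congr 1
    ring
  rw [qnum, qnum, Complex.exp_neg (h * (α - _)), h1, Complex.exp_neg, Complex.exp_neg, exp_nat_h,
    mul_inv, inv_inv]
  ring

theorem den_ne {x : ℂ} (hx : x ≠ 0) (h2 : x ^ 2 - 1 ≠ 0) : x - x⁻¹ ≠ 0 := by
  intro h0
  apply h2
  have : x * (x - x⁻¹) = x ^ 2 - 1 := by
    rw [mul_sub, mul_inv_cancel₀ hx]
    ring
  rw [← this, h0, mul_zero]

set_option maxHeartbeats 8000000 in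
/-- The right boundary operator `b_r` is an idempotent `U_q(sl_2)`-intertwiner
with blob weight `y_r = [α_r+1]_q/[α_r]_q`. -/
theorem bR_idempotent_intertwiner_blob_weight (h αr : ℂ) (hq : Complex.exp h ^ 2 ≠ 1)
    (hαr : Complex.exp (h * αr) ≠ Complex.exp (-(h * αr))) :
    bR h αr * bR h αr = bR h αr ∧
    bR h αr * coE h αr = coE h αr * bR h αr ∧
    bR h αr * coF h = coF h * bR h αr ∧
    bR h αr * coK h αr = coK h αr * bR h αr ∧
    bR h αr * coKinv h αr = coKinv h αr * bR h αr ∧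
    eOp4 h * bSnd h αr * eOp4 h = (qnum h (αr + 1) / qnum h αr) • eOp4 h := by
  have hq0 : Complex.exp h ≠ 0 := Complex.exp_ne_zero h
  have ha0 : Complex.exp (h * αr) ≠ 0 := Complex.exp_ne_zero _
  have hx0 : ∀ n : ℕ, Complex.exp h ^ n ≠ 0 := fun n => pow_ne_zero n hq0
  have hq2 : Complex.exp h ^ 2 - 1 ≠ 0 := sub_ne_zero.mpr hq
  have ha2 : Complex.exp (h * αr) ^ 2 - 1 ≠ 0 := by
    intro h0
    apply hαr
    rw [Complex.exp_neg]
    field_simp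
    linear_combination h0
  have hqd := den_ne hq0 hq2
  have had := den_ne ha0 ha2
  clear hq hαr
  refine ⟨?_, ?_, ?_, ?_, ?_, ?_⟩
  · refine Matrix.ext fun i j => ?_
    fin_cases i <;> fin_cases j <;> apply op_ext_ket <;> intro n <;> rcases n with _ | n <;>
      simp [bR, Matrix.mul_apply, Fin.sum_univ_two, Fop_ket, Kop_ket, Kinv_ket, Eop_ket_zero,
        Eop_ket_succ, Complex.exp_neg, Module.End.mul_apply, smul_smul, pow_succ (Complex.exp h)] <;>
      generalize Complex.exp h = q at * <;> generalize Complex.exp (h * αr) = a at * <;>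
      (try (have hxn := hx0 n; generalize q ^ n = x at *)) <;>
      (try match_scalars) <;> field_simp <;> ring
  · refine Matrix.ext fun i j => ?_
    fin_cases i <;> fin_cases j <;> apply op_ext_ket <;> intro n <;> rcases n with _ | n <;>
      simp [bR, coE, Matrix.mul_apply, Fin.sum_univ_two, Fop_ket, Kop_ket, Kinv_ket, Eop_ket_zero,
        Eop_ket_succ, Complex.exp_neg, Module.End.mul_apply, smul_smul, pow_succ (Complex.exp h)] <;>
      generalize Complex.exp h = q at * <;> generalize Complex.exp (h * αr) = a at * <;>
      (try (have hxn := hx0 n; generalize q ^ n = x at *)) <;>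
      (try match_scalars) <;> field_simp <;> ring
  · refine Matrix.ext fun i j => ?_
    fin_cases i <;> fin_cases j <;> apply op_ext_ket <;> intro n <;> rcases n with _ | n <;>
      simp [bR, coF, Matrix.mul_apply, Fin.sum_univ_two, Fop_ket, Kop_ket, Kinv_ket, Eop_ket_zero,
        Eop_ket_succ, Complex.exp_neg, Module.End.mul_apply, smul_smul, pow_succ (Complex.exp h)] <;>
      generalize Complex.exp h = q at * <;> generalize Complex.exp (h * αr) = a at * <;>
      (try (have hxn := hx0 n; generalize q ^ n = x at *)) <;>
      (try match_scalars) <;> field_simp <;> ring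
  · refine Matrix.ext fun i j => ?_
    fin_cases i <;> fin_cases j <;> apply op_ext_ket <;> intro n <;> rcases n with _ | n <;>
      simp [bR, coK, Matrix.mul_apply, Fin.sum_univ_two, Fop_ket, Kop_ket, Kinv_ket, Eop_ket_zero,
        Eop_ket_succ, Complex.exp_neg, Module.End.mul_apply, smul_smul, pow_succ (Complex.exp h)] <;>
      generalize Complex.exp h = q at * <;> generalize Complex.exp (h * αr) = a at * <;>
      (try (have hxn := hx0 n; generalize q ^ n = x at *)) <;>
      (try match_scalars) <;> field_simp <;> ring
  · refine Matrix.ext fun i j => ?_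
    fin_cases i <;> fin_cases j <;> apply op_ext_ket <;> intro n <;> rcases n with _ | n <;>
      simp [bR, coKinv, Matrix.mul_apply, Fin.sum_univ_two, Fop_ket, Kop_ket, Kinv_ket, Eop_ket_zero,
        Eop_ket_succ, Complex.exp_neg, Module.End.mul_apply, smul_smul, pow_succ (Complex.exp h)] <;>
      generalize Complex.exp h = q at * <;> generalize Complex.exp (h * αr) = a at * <;>
      (try (have hxn := hx0 n; generalize q ^ n = x at *)) <;>
      (try match_scalars) <;> field_simp <;> ring
  · have e1 : qnum h (αr + 1) / qnum h αr =
        (Complex.exp (h * αr) * Complex.exp h - (Complex.exp (h * αr))⁻¹ * (Complex.exp h)⁻¹) *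
          (Complex.exp (h * αr) - (Complex.exp (h * αr))⁻¹)⁻¹ := by
      rw [qnum, qnum, mul_add, mul_one, Complex.exp_neg, Complex.exp_neg, Complex.exp_neg,
        Complex.exp_add, mul_inv, div_div_div_cancel_right₀ hqd]
      rfl
    rw [e1]
    refine Matrix.ext fun ⟨i, i'⟩ ⟨j, j'⟩ => ?_
    fin_cases i <;> fin_cases i' <;> fin_cases j <;> fin_cases j' <;>
      simp [eOp4, eTL, bSnd, Matrix.mul_apply, Fintype.sum_prod_type] <;>
      apply op_ext_ket <;> intro n <;>
      simp [bR, Kop_ket, Complex.exp_neg, smul_smul] <;>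
      generalize Complex.exp h = q at * <;> generalize Complex.exp (h * αr) = a at * <;>
      match_scalars <;> field_simp <;> ring
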